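/- A subset S ⊆ E is essential if and only if it is cyclic, i.e. δ(T) > δ(S) holds for every proper subset T ⊊ S if and only if S is a union of circuits. -/

import Mathlib

/-!
Everything rests on the submodularity of the defect,
`δ(A ∪ B) + δ(A ∩ B) ≤ δ(A) + δ(B)` (`defect_union_add_inter_le`).

*Cyclic sets are essential.* A circuit is essential, as its defect is negative and its proper
subsets have nonnegative defect. By submodularity, adjoining an essential set `A` to a set that
does not contain it strictly decreases the defect, so unions of essential sets are essential.

*Essential sets are cyclic.* Let `e ∈ S` lie in no circuit contained in `S`, and let `I` be a
maximal independent subset of `S \ {e}`; then `I ∪ {e}` is independent. By maximality, each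
`f ∈ S \ {e}` outside `I` has `L f` contained in the span of a subset of `I` of defect `0`
(`exists_tight`). By submodularity, subsets of defect `0` of an independent set are stable under
union, so one such `T ⊆ I` serves all `f`. For `U = T ∪ (S \ {e} \ I)` this gives
`δ(U) = -|S \ {e} \ I|`, while `dim ⟨S⟩ ≥ dim ⟨I ∪ {e}⟩ ≥ |I| + 1` gives `δ(S) ≥ δ(U)`. As
`e ∉ U`, the set `S` is not essential.
-/

namespace Mink

variable (K : Type*) [Field K] {V : Type*} [AddCommGroup V] [Module K V] {ι : Type*}

/-- The defect of a subset `S` of the index set: `dim ⟨S⟩ - |S|`,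
where `⟨S⟩ = ∑ i ∈ S, L i`. -/
noncomputable def defect (L : ι → Submodule K V) (S : Finset ι) : ℤ :=
  (Module.finrank K ↥(S.sup L) : ℤ) - S.card

/-- `S` is linearly independent in the sense of Minkowski:
every subset of `S` has non-negative defect. -/
def Indep (L : ι → Submodule K V) (S : Finset ι) : Prop :=
  ∀ T ⊆ S, 0 ≤ defect K L T

/-- A BK-set: a linearly independent subset with defect 0. -/
def BKSet (L : ι → Submodule K V) (S : Finset ι) : Prop :=
  Indep K L S ∧ defect K L S = 0

/-- A circuit: a minimal-by-inclusion linearly dependent subset. -/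
def Circuit (L : ι → Submodule K V) (C : Finset ι) : Prop :=
  ¬ Indep K L C ∧ ∀ T ⊂ C, Indep K L T

/-- A basis: a maximal-by-inclusion linearly independent subset. -/
def IsBasisSet (L : ι → Submodule K V) (B : Finset ι) : Prop :=
  Indep K L B ∧ ∀ S : Finset ι, Indep K L S → B ⊆ S → S = B

open Classical in
/-- The Minkowski rank: the maximal cardinality of a linearly independent subset. -/
noncomputable def minkRank [Fintype ι] (L : ι → Submodule K V) : ℕ :=
  ((Finset.univ : Finset (Finset ι)).filter fun S => Indep K L S).sup Finset.card

lemma defect_empty (L : ι → Submodule K V) : defect K L ∅ = 0 := by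
  rw [defect, Finset.sup_empty, finrank_bot, Finset.card_empty, sub_self]

lemma defect_union_add_inter_le [FiniteDimensional K V] [DecidableEq ι]
    (L : ι → Submodule K V) (A B : Finset ι) :
    defect K L (A ∪ B) + defect K L (A ∩ B) ≤ defect K L A + defect K L B := by
  have hd := Submodule.finrank_sup_add_finrank_inf_eq (A.sup L) (B.sup L)
  have hi : Module.finrank K ↥((A ∩ B).sup L) ≤ Module.finrank K ↥(A.sup L ⊓ B.sup L) :=
    Submodule.finrank_mono (le_inf (Finset.sup_mono Finset.inter_subset_left)
      (Finset.sup_mono Finset.inter_subset_right))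
  have hc := Finset.card_union_add_card_inter A B
  unfold defect
  rw [Finset.sup_union]
  omega

/-- `S` is essential: every proper subset has strictly larger defect. -/
def Essential (L : ι → Submodule K V) (S : Finset ι) : Prop :=
  ∀ T ⊂ S, defect K L S < defect K L T

section

variable {K}

lemma Circuit.defect_neg {L : ι → Submodule K V} {C : Finset ι} (hC : Circuit K L C) :
    defect K L C < 0 := by
  by_contra! h
  refine hC.1 fun T hT => ?_
  rcases hT.eq_or_ssubset with rfl | hT
  · exact h
  · exact hC.2 T hT T subset_rfl

lemma Circuit.essential {L : ι → Submodule K V} {C : Finset ι} (hC : Circuit K L C) :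
    Essential K L C :=
  fun T hT => hC.defect_neg.trans_le (hC.2 T hT T subset_rfl)

lemma Essential.defect_union_lt [FiniteDimensional K V] [DecidableEq ι]
    {L : ι → Submodule K V} {A T : Finset ι} (hA : Essential K L A) (h : ¬ A ⊆ T) :
    defect K L (T ∪ A) < defect K L T := by
  have h1 := defect_union_add_inter_le K L T A
  have h2 := hA (T ∩ A) ⟨Finset.inter_subset_right,
    fun h' => h (h'.trans Finset.inter_subset_left)⟩
  linarith

lemma Essential.defect_union_le [FiniteDimensional K V] [DecidableEq ι]
    {L : ι → Submodule K V} {A : Finset ι} (hA : Essential K L A) (T : Finset ι) :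
    defect K L (T ∪ A) ≤ defect K L T := by
  by_cases h : A ⊆ T
  · rw [Finset.union_eq_left.mpr h]
  · exact (hA.defect_union_lt h).le

lemma Essential.union [FiniteDimensional K V] [DecidableEq ι]
    {L : ι → Submodule K V} {A B : Finset ι} (hA : Essential K L A) (hB : Essential K L B) :
    Essential K L (A ∪ B) := by
  intro T hT
  have key : T ∪ A ∪ B = A ∪ B := by
    rw [Finset.union_assoc, Finset.union_eq_right.mpr hT.1]
  by_cases h : A ⊆ T
  · have hB' : ¬ B ⊆ T := fun h' => hT.2 (Finset.union_subset h h')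
    have := hB.defect_union_lt hB'
    rwa [← key, Finset.union_eq_left.mpr h]
  · have h1 := hA.defect_union_lt h
    have h2 := hB.defect_union_le (T ∪ A)
    rw [key] at h2
    exact h2.trans_lt h1

lemma Indep.subset {L : ι → Submodule K V} {I J : Finset ι} (hI : Indep K L I) (h : J ⊆ I) :
    Indep K L J :=
  fun T hT => hI T (hT.trans h)

lemma exists_circuit_subset {L : ι → Submodule K V} {S : Finset ι} (hS : ¬ Indep K L S) :
    ∃ C ⊆ S, Circuit K L C := by
  induction S using Finset.strongInduction with
  | H S ih =>
    by_cases h : ∀ T ⊂ S, Indep K L T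
    · exact ⟨S, subset_rfl, hS, h⟩
    · push Not at h
      obtain ⟨T, hT, hT'⟩ := h
      obtain ⟨C, hC, hC'⟩ := ih T hT hT'
      exact ⟨C, hC.trans hT.1, hC'⟩

/-- If adding `f` to an independent set `I` makes it dependent, then `L f` lies in the span of a
subset of `I` of defect zero: passing from `T` to `T ∪ {f}` lowers the defect by at most one, with
equality exactly when `L f ≤ ⟨T⟩`. -/
lemma exists_tight [FiniteDimensional K V] [DecidableEq ι]
    {L : ι → Submodule K V} {I : Finset ι} {f : ι} (hI : Indep K L I)
    (hf : ¬ Indep K L (insert f I)) :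
    ∃ T ⊆ I, defect K L T = 0 ∧ L f ≤ T.sup L := by
  unfold Indep at hf
  push Not at hf
  obtain ⟨D, hD, hneg⟩ := hf
  have hfD : f ∈ D := by
    by_contra h
    exact absurd (hI D ((Finset.subset_insert_iff_of_notMem h).mp hD)) (not_le.mpr hneg)
  have hT : D.erase f ⊆ I := Finset.subset_insert_iff.mp hD
  have h0 := hI _ hT
  have hle : (D.erase f).sup L ≤ D.sup L := Finset.sup_mono (Finset.erase_subset f D)
  have hdim := Submodule.finrank_mono hle
  have hcard := Finset.card_erase_add_one hfD
  unfold defect at h0 hneg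
  refine ⟨D.erase f, hT, ?_, ?_⟩
  · unfold defect
    omega
  · rw [Submodule.eq_of_le_of_finrank_eq hle (by omega)]
    exact Finset.le_sup hfD

/-- Finitely many spans of defect-zero subsets of an independent set are contained in a single
one. -/
lemma exists_common_tight [FiniteDimensional K V] [DecidableEq ι]
    {L : ι → Submodule K V} {I F : Finset ι} (hI : Indep K L I)
    (hF : ∀ f ∈ F, ∃ T ⊆ I, defect K L T = 0 ∧ L f ≤ T.sup L) :
    ∃ T ⊆ I, defect K L T = 0 ∧ F.sup L ≤ T.sup L := by
  refine Finset.sup_induction (p := fun W => ∃ T ⊆ I, defect K L T = 0 ∧ W ≤ T.sup L)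
    ⟨∅, Finset.empty_subset _, defect_empty K L, bot_le⟩ ?_ hF
  rintro W₁ ⟨T₁, h₁, d₁, l₁⟩ W₂ ⟨T₂, h₂, d₂, l₂⟩
  have hU := Finset.union_subset h₁ h₂
  refine ⟨T₁ ∪ T₂, hU, ?_, ?_⟩
  · have := defect_union_add_inter_le K L T₁ T₂
    have := hI _ hU
    have := hI (T₁ ∩ T₂) (Finset.inter_subset_left.trans h₁)
    omega
  · rw [Finset.sup_union]
    exact sup_le_sup l₁ l₂

/-- An essential set has no coloops: each of its elements lies in a circuit contained in it. -/
lemma Essential.exists_circuit_mem [FiniteDimensional K V] [DecidableEq ι]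
    {L : ι → Submodule K V} {S : Finset ι} (hS : Essential K L S) {e : ι} (he : e ∈ S) :
    ∃ C ⊆ S, Circuit K L C ∧ e ∈ C := by
  classical
  by_contra! hno
  have hadd : ∀ J ⊆ S, Indep K L J → Indep K L (insert e J) := by
    intro J hJ hJi
    by_contra hdep
    obtain ⟨C, hC, hCc⟩ := exists_circuit_subset hdep
    have heC := hno C (hC.trans (Finset.insert_subset he hJ)) hCc
    exact hCc.1 (hJi.subset ((Finset.subset_insert_iff_of_notMem heC).mp hC))
  have hne : ((S.erase e).powerset.filter fun J => Indep K L J).Nonempty := by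
    refine ⟨∅, ?_⟩
    simp only [Finset.mem_filter, Finset.mem_powerset, Finset.empty_subset, true_and]
    intro T hT
    rw [Finset.subset_empty.mp hT, defect_empty]
  obtain ⟨I, hI, hmax⟩ := Finset.exists_max_image _ Finset.card hne
  simp only [Finset.mem_filter, Finset.mem_powerset] at hI hmax
  obtain ⟨hIS, hIi⟩ := hI
  have hF : ∀ f ∈ S.erase e \ I, ∃ T ⊆ I, defect K L T = 0 ∧ L f ≤ T.sup L := by
    intro f hf
    rw [Finset.mem_sdiff] at hf
    refine exists_tight hIi fun hdep => ?_
    have := hmax (insert f I) ⟨Finset.insert_subset hf.1 hIS, hdep⟩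
    rw [Finset.card_insert_of_notMem hf.2] at this
    omega
  obtain ⟨T, hT, hT0, hTF⟩ := exists_common_tight hIi hF
  have heI : e ∉ I := fun h => Finset.notMem_erase e S (hIS h)
  have hsub : T ∪ (S.erase e \ I) ⊆ S.erase e :=
    Finset.union_subset (hT.trans hIS) Finset.sdiff_subset
  -- Essentiality, applied to `T ∪ (S \ {e} \ I)`, gives `dim ⟨S⟩ ≤ |I|`, whereas independence of
  -- `I ∪ {e}` gives `dim ⟨S⟩ ≥ |I| + 1`.
  have hlt := hS _ (hsub.trans_ssubset (Finset.erase_ssubset he))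
  have hins : insert e I ⊆ S := Finset.insert_subset he (hIS.trans (Finset.erase_subset e S))
  have hpos := hadd I (hIS.trans (Finset.erase_subset e S)) hIi _ subset_rfl
  have hdim := Submodule.finrank_mono (Finset.sup_mono (f := L) hins)
  have hc1 := Finset.card_erase_add_one he
  have hc2 := Finset.card_sdiff_add_card_eq_card hIS
  have hc3 : (T ∪ (S.erase e \ I)).card = T.card + (S.erase e \ I).card :=
    Finset.card_union_of_disjoint (Finset.disjoint_of_subset_left hT Finset.disjoint_sdiff)
  have hc4 := Finset.card_insert_of_notMem heI
  unfold defect at hlt hpos hT0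
  rw [Finset.sup_union, sup_eq_left.mpr hTF] at hlt
  omega

end

/-- a subset `S ⊆ E` is essential iff it is cyclic, i.e.
`δ(T) > δ(S)` for every proper subset `T ⊊ S` iff `S` is a union of circuits. -/
theorem statement16 [FiniteDimensional K V] [DecidableEq ι] (L : ι → Submodule K V) (S : Finset ι) :
    (∀ T ⊂ S, defect K L S < defect K L T) ↔
      ∃ 𝒞 : Finset (Finset ι), (∀ C ∈ 𝒞, Circuit K L C) ∧ 𝒞.sup id = S := by
  classical
  constructor
  · intro hS
    refine ⟨S.powerset.filter fun C => Circuit K L C, fun C hC => (Finset.mem_filter.mp hC).2, ?_⟩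
    refine le_antisymm (Finset.sup_le fun C hC => ?_) fun e he => ?_
    · exact Finset.mem_powerset.mp (Finset.mem_filter.mp hC).1
    · obtain ⟨C, hCS, hC, heC⟩ := Essential.exists_circuit_mem hS he
      exact Finset.mem_sup.mpr
        ⟨C, Finset.mem_filter.mpr ⟨Finset.mem_powerset.mpr hCS, hC⟩, heC⟩
  · rintro ⟨𝒞, h𝒞, rfl⟩
    exact Finset.sup_induction (p := Essential K L)
      (fun T hT => absurd hT (Finset.not_ssubset_empty T))
      (fun A hA B hB => hA.union hB) fun C hC => (h𝒞 C hC).essential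

end Mink
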